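/- arXiv:2504.14844 — 2 statements merged into one kernel-verified Lean document; each statement's English description precedes it below -/
import Mathlib

section
/- Let $\Bbbk$ be an infinite field (or work over an algebraically closed field), and let $a_1,a_2,a_3 \in \mathbb{N}$. For pairs $(r_1,r_2)$ and $(r_1',r_2')$ both satisfying $r_i \leq a_i$-type admissibility conditions ($r_1 \le a_1$, $r_2 \le a_3$, $r_1+r_2 \le a_2$, and same for primed), the orbit closure $\overline{\mathbb{O}(r_1,r_2)}$ contains the orbit $\mathbb{O}(r_1',r_2')$ if and only if $r_1 \geq r_1'$ and $r_2 \geq r_2'$. In particular, any pair $(\alpha_1',\alpha_2')$ with $\alpha_2'\alpha_1' = 0$, $\mathrm{rank}\,\alpha_1' = r_1' \le r_1$, $\mathrm{rank}\,\alpha_2' = r_2' \le r_2$ is a limit of a one-parameter family $(\alpha_1(t), \alpha_2(t))$ with $\alpha_2(t)\alpha_1(t)=0$, of ranks $(r_1,r_2)$ for $t \ne 0$, specializing at $t = 0$ to $(\alpha_1',\alpha_2')$. -/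
open Polynomial in
theorem aux_LR {𝕜 : Type*} [Field 𝕜] {m n : ℕ} (A : Matrix (Fin m) (Fin n) 𝕜) :
    ∃ (L : Matrix (Fin A.rank) (Fin m) 𝕜) (R : Matrix (Fin n) (Fin A.rank) 𝕜),
      L * A * R = 1 := by
  let f := A.mulVecLin
  have hd : Module.finrank 𝕜 (LinearMap.range f) = Module.finrank 𝕜 (Fin A.rank → 𝕜) := by
    rw [Module.finrank_fin_fun]; rfl
  let e := LinearEquiv.ofFinrankEq _ _ hd
  obtain ⟨p, hp⟩ := LinearMap.exists_leftInverse_of_injective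
    ((LinearMap.range f).subtype ∘ₗ e.symm.toLinearMap) (by
      rw [LinearMap.ker_eq_bot]
      exact (Submodule.injective_subtype _).comp e.symm.injective)
  obtain ⟨s, hs⟩ := LinearMap.exists_rightInverse_of_surjective
    (e.toLinearMap ∘ₗ f.rangeRestrict) (by
      rw [LinearMap.range_eq_top]
      exact e.surjective.comp f.surjective_rangeRestrict)
  refine ⟨LinearMap.toMatrix' p, LinearMap.toMatrix' s, ?_⟩
  have hA : LinearMap.toMatrix' f = A := LinearMap.toMatrix'_toLin' A
  have key : (p ∘ₗ f) ∘ₗ s = LinearMap.id := by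
    apply LinearMap.ext
    intro x
    have h1 := LinearMap.congr_fun hs x
    have h2 := LinearMap.congr_fun hp x
    simp only [LinearMap.comp_apply, LinearEquiv.coe_coe, LinearMap.id_apply,
      Submodule.subtype_apply] at h1 h2 ⊢
    have h3 : f.rangeRestrict (s x) = e.symm x := by rw [LinearEquiv.eq_symm_apply]; exact h1
    rw [← h3] at h2
    exact h2
  have h4 : LinearMap.toMatrix' p * LinearMap.toMatrix' f * LinearMap.toMatrix' s = 1 := by
    rw [← LinearMap.toMatrix'_comp, ← LinearMap.toMatrix'_comp, key, LinearMap.toMatrix'_id]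
  rw [hA] at h4
  exact h4

open Polynomial in
theorem aux_semicont {𝕜 : Type*} [Field 𝕜] [Infinite 𝕜] {m n r : ℕ}
    (P : Matrix (Fin m) (Fin n) 𝕜[X])
    (h : ∀ t : 𝕜, t ≠ 0 → (P.map (Polynomial.eval t)).rank = r) :
    (P.map (Polynomial.eval 0)).rank ≤ r := by
  obtain ⟨L, R, hLR⟩ := aux_LR (P.map (Polynomial.eval 0))
  let q : 𝕜[X] := (L.map C * P * R.map C).det
  have hq : ∀ t, q.eval t = (L * P.map (Polynomial.eval t) * R).det := by
    intro t
    have := RingHom.map_det (Polynomial.evalRingHom t) (L.map C * P * R.map C)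
    rw [RingHom.mapMatrix_apply, Matrix.map_mul, Matrix.map_mul, Matrix.map_map,
      Matrix.map_map] at this
    have hc : (⇑(Polynomial.evalRingHom t) ∘ ⇑(C : 𝕜 →+* 𝕜[X])) = id := by
      funext x; simp
    rw [hc, Matrix.map_id, Matrix.map_id] at this
    exact this
  have hq0 : q ≠ 0 := by
    intro h0
    have := hq 0
    rw [h0, hLR] at this
    simp at this
  have hX : q * X ≠ 0 := mul_ne_zero hq0 X_ne_zero
  obtain ⟨t, ht⟩ : ∃ t, (q * X).eval t ≠ 0 := by
    by_contra! hc
    exact hX (Polynomial.funext (by simpa using hc))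
  rw [eval_mul, eval_X] at ht
  have ht0 : t ≠ 0 := right_ne_zero_of_mul ht
  have hqt := left_ne_zero_of_mul ht
  rw [hq] at hqt
  have hu := Matrix.rank_of_isUnit _ ((Matrix.isUnit_iff_isUnit_det _).2 (isUnit_iff_ne_zero.2 hqt))
  rw [Fintype.card_fin] at hu
  rw [← h t ht0, ← hu]
  exact (Matrix.rank_mul_le_left _ _).trans (Matrix.rank_mul_le_right _ _)

theorem aux_rank {𝕜 V W : Type*} [Field 𝕜] [AddCommGroup V] [Module 𝕜 V] [AddCommGroup W]
    [Module 𝕜 W] [FiniteDimensional 𝕜 W] (f g : V →ₗ[𝕜] W)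
    (S Y : Submodule 𝕜 V) (hSY : S ⊔ Y = ⊤) (hf : ∀ y ∈ Y, f y = 0) (hg : ∀ x ∈ S, g x = 0)
    (hd : Disjoint (LinearMap.range f) (LinearMap.range g)) (t : 𝕜) (ht : t ≠ 0) :
    Module.finrank 𝕜 (LinearMap.range (f + t • g)) =
      Module.finrank 𝕜 (LinearMap.range f) + Module.finrank 𝕜 (LinearMap.range g) := by
  have hr : LinearMap.range (f + t • g) = LinearMap.range f ⊔ LinearMap.range g := by
    apply le_antisymm
    · rintro _ ⟨v, rfl⟩
      exact Submodule.add_mem_sup ⟨v, rfl⟩ (Submodule.smul_mem _ _ ⟨v, rfl⟩)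
    · refine sup_le ?_ ?_
      · rintro _ ⟨v, rfl⟩
        obtain ⟨x, hx, y, hy, rfl⟩ := Submodule.mem_sup.1 (hSY ▸ Submodule.mem_top : v ∈ S ⊔ Y)
        exact ⟨x, by simp [hf y hy, hg x hx]⟩
      · rintro _ ⟨v, rfl⟩
        obtain ⟨x, hx, y, hy, rfl⟩ := Submodule.mem_sup.1 (hSY ▸ Submodule.mem_top : v ∈ S ⊔ Y)
        exact ⟨t⁻¹ • y, by simp [hf y hy, hg x hx, smul_smul, ht]⟩
  have := Submodule.finrank_sup_add_finrank_inf_eq (LinearMap.range f) (LinearMap.range g)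
  rw [hd.eq_bot, finrank_bot, add_zero] at this
  rw [hr, this]

theorem aux_sub {𝕜 V : Type*} [Field 𝕜] [AddCommGroup V] [Module 𝕜 V] [FiniteDimensional 𝕜 V]
    (D : Submodule 𝕜 V) (k : ℕ) (hk : k ≤ Module.finrank 𝕜 D) :
    ∃ i : (Fin k → 𝕜) →ₗ[𝕜] V, Function.Injective i ∧ LinearMap.range i ≤ D := by
  obtain ⟨v, hv⟩ := exists_linearIndependent_of_le_finrank hk
  let j := Fintype.linearCombination 𝕜 v
  have hj : Function.Injective j := hv.fintypeLinearCombination_injective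
  refine ⟨D.subtype ∘ₗ j, (Submodule.injective_subtype _).comp hj, ?_⟩
  rintro _ ⟨x, rfl⟩
  exact (j x).2

theorem aux_map {𝕜 V W : Type*} [Field 𝕜] [AddCommGroup V] [Module 𝕜 V] [AddCommGroup W]
    [Module 𝕜 W] [FiniteDimensional 𝕜 V] [FiniteDimensional 𝕜 W]
    (S Y : Submodule 𝕜 V) (hSY : IsCompl S Y) (D : Submodule 𝕜 W) (k : ℕ)
    (hY : k ≤ Module.finrank 𝕜 Y) (hD : k ≤ Module.finrank 𝕜 D) :
    ∃ g : V →ₗ[𝕜] W, (∀ x ∈ S, g x = 0) ∧ LinearMap.range g ≤ D ∧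
      Module.finrank 𝕜 (LinearMap.range g) = k := by
  obtain ⟨i, hi, hiD⟩ := aux_sub D k hD
  obtain ⟨j, hj, -⟩ := aux_sub (⊤ : Submodule 𝕜 Y) k (by simpa using hY)
  obtain ⟨p, hp⟩ := LinearMap.exists_leftInverse_of_injective j (LinearMap.ker_eq_bot.2 hj)
  let π := Submodule.projectionOnto Y S hSY.symm
  have hs : Function.Surjective (p ∘ₗ π) := by
    intro x
    refine ⟨(j x : V), ?_⟩
    have h0 : π (j x : V) = j x := Submodule.projectionOnto_apply_left hSY.symm (j x)
    rw [LinearMap.comp_apply, h0]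
    exact LinearMap.congr_fun hp x
  refine ⟨i ∘ₗ (p ∘ₗ π), ?_, ?_, ?_⟩
  · intro x hx
    have : π x = 0 := (Submodule.projectionOnto_apply_eq_zero_iff hSY.symm).2 hx
    simp [this]
  · exact (LinearMap.range_comp_le_range _ _).trans hiD
  · rw [LinearMap.range_comp, LinearMap.range_eq_top.2 hs, Submodule.map_top,
      LinearMap.finrank_range_of_inj hi, Module.finrank_fin_fun]

theorem aux_main {𝕜 U V W : Type*} [Field 𝕜] [AddCommGroup U] [Module 𝕜 U] [AddCommGroup V]
    [Module 𝕜 V] [AddCommGroup W] [Module 𝕜 W] [FiniteDimensional 𝕜 U] [FiniteDimensional 𝕜 V]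
    [FiniteDimensional 𝕜 W] (f : U →ₗ[𝕜] V) (g : V →ₗ[𝕜] W) (hgf : g ∘ₗ f = 0) (k l : ℕ)
    (h1 : Module.finrank 𝕜 (LinearMap.range f) + k ≤ Module.finrank 𝕜 U)
    (h2 : Module.finrank 𝕜 (LinearMap.range g) + l ≤ Module.finrank 𝕜 W)
    (h3 : Module.finrank 𝕜 (LinearMap.range f) + k + (Module.finrank 𝕜 (LinearMap.range g) + l)
      ≤ Module.finrank 𝕜 V) :
    ∃ (f' : U →ₗ[𝕜] V) (g' : V →ₗ[𝕜] W), g ∘ₗ f' = 0 ∧ g' ∘ₗ f = 0 ∧ g' ∘ₗ f' = 0 ∧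
      (∀ t : 𝕜, t ≠ 0 → Module.finrank 𝕜 (LinearMap.range (f + t • f')) =
        Module.finrank 𝕜 (LinearMap.range f) + k) ∧
      (∀ t : 𝕜, t ≠ 0 → Module.finrank 𝕜 (LinearMap.range (g + t • g')) =
        Module.finrank 𝕜 (LinearMap.range g) + l) := by
  have hle : LinearMap.range f ≤ LinearMap.ker g := LinearMap.range_le_ker_iff.2 hgf
  have nf := LinearMap.finrank_range_add_finrank_ker f
  have ng := LinearMap.finrank_range_add_finrank_ker g
  -- complement of `S` inside `ker g`
  have hcomp : ∀ S : Submodule 𝕜 V, S ≤ LinearMap.ker g → ∃ H : Submodule 𝕜 V,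
      H ≤ LinearMap.ker g ∧ Disjoint S H ∧
      Module.finrank 𝕜 S + Module.finrank 𝕜 H = Module.finrank 𝕜 (LinearMap.ker g) := by
    intro S hS
    obtain ⟨T, hT⟩ := exists_isCompl S
    have hd : Disjoint S (T ⊓ LinearMap.ker g) := hT.disjoint.mono_right inf_le_left
    refine ⟨T ⊓ LinearMap.ker g, inf_le_right, hd, ?_⟩
    have := Submodule.finrank_sup_add_finrank_inf_eq S (T ⊓ LinearMap.ker g)
    rw [hd.eq_bot, finrank_bot, add_zero, ← sup_inf_assoc_of_le _ hS, hT.sup_eq_top,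
      top_inf_eq] at this
    exact this.symm
  obtain ⟨H, hHk, hHd, hHf⟩ := hcomp _ hle
  obtain ⟨X₁, hX₁⟩ := exists_isCompl (LinearMap.ker f)
  obtain ⟨f', hf'0, hf'r, hf'k⟩ := aux_map X₁ (LinearMap.ker f) hX₁.symm H k (by omega) (by omega)
  have hd1 : Disjoint (LinearMap.range f) (LinearMap.range f') := hHd.mono_right hf'r
  obtain ⟨H2, hH2k, hH2d, hH2f⟩ := hcomp (LinearMap.range f ⊔ LinearMap.range f')
    (sup_le hle (hf'r.trans hHk))
  have hs := Submodule.finrank_sup_add_finrank_inf_eq (LinearMap.range f) (LinearMap.range f')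
  rw [hd1.eq_bot, finrank_bot, add_zero] at hs
  obtain ⟨X₂, hSX, hX₂⟩ := hH2d.exists_isCompl
  obtain ⟨D, hD⟩ := exists_isCompl (LinearMap.range g)
  have hDf := Submodule.finrank_add_eq_of_isCompl hD
  obtain ⟨g', hg'0, hg'r, hg'k⟩ := aux_map X₂ H2 hX₂ D l (by omega) (by omega)
  refine ⟨f', g', ?_, ?_, ?_, ?_, ?_⟩
  · exact LinearMap.range_le_ker_iff.1 (hf'r.trans hHk)
  · ext x
    exact hg'0 _ (hSX (Submodule.mem_sup_left ⟨x, rfl⟩))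
  · ext x
    exact hg'0 _ (hSX (Submodule.mem_sup_right ⟨x, rfl⟩))
  · intro t ht
    rw [aux_rank f f' X₁ (LinearMap.ker f) hX₁.symm.sup_eq_top (fun y hy => hy) hf'0 hd1 t ht, hf'k]
  · intro t ht
    rw [aux_rank g g' X₂ H2 hX₂.sup_eq_top (fun y hy => hH2k hy) hg'0
      (hD.disjoint.mono_right hg'r) t ht, hg'k]

/-- One-parameter degeneration in the variety of complexes: for admissible rank pairs
`(r₁,r₂)` and `(r₁',r₂')`, a point `(A₁,A₂)` with `A₂A₁ = 0` of ranks `(r₁',r₂')` is the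
specialization at `t = 0` of a polynomial family of complexes of ranks `(r₁,r₂)` for `t ≠ 0`
if and only if `r₁' ≤ r₁` and `r₂' ≤ r₂` (the orbit-closure order). -/
theorem stmt3 (𝕜 : Type*) [Field 𝕜] [Infinite 𝕜] (a₁ a₂ a₃ r₁ r₂ r₁' r₂' : ℕ)
    (hadm : r₁ ≤ a₁ ∧ r₂ ≤ a₃ ∧ r₁ + r₂ ≤ a₂)
    (hadm' : r₁' ≤ a₁ ∧ r₂' ≤ a₃ ∧ r₁' + r₂' ≤ a₂)
    (A₁ : Matrix (Fin a₂) (Fin a₁) 𝕜) (A₂ : Matrix (Fin a₃) (Fin a₂) 𝕜)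
    (hcomp : A₂ * A₁ = 0) (hr₁ : A₁.rank = r₁') (hr₂ : A₂.rank = r₂') :
    (∃ (P₁ : Matrix (Fin a₂) (Fin a₁) (Polynomial 𝕜))
        (P₂ : Matrix (Fin a₃) (Fin a₂) (Polynomial 𝕜)),
        (∀ t : 𝕜, P₂.map (Polynomial.eval t) * P₁.map (Polynomial.eval t) = 0) ∧
        P₁.map (Polynomial.eval 0) = A₁ ∧
        P₂.map (Polynomial.eval 0) = A₂ ∧
        ∀ t : 𝕜, t ≠ 0 →
          (P₁.map (Polynomial.eval t)).rank = r₁ ∧ (P₂.map (Polynomial.eval t)).rank = r₂) ↔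
    (r₁' ≤ r₁ ∧ r₂' ≤ r₂) := by
  constructor
  · rintro ⟨P₁, P₂, -, h1, h2, h⟩
    rw [← hr₁, ← hr₂, ← h1, ← h2]
    exact ⟨aux_semicont P₁ fun t ht => (h t ht).1, aux_semicont P₂ fun t ht => (h t ht).2⟩
  · rintro ⟨hk, hl⟩
    obtain ⟨k, rfl⟩ := Nat.exists_eq_add_of_le hk
    obtain ⟨l, rfl⟩ := Nat.exists_eq_add_of_le hl
    have e1 : Module.finrank 𝕜 (LinearMap.range A₁.mulVecLin) = r₁' := hr₁
    have e2 : Module.finrank 𝕜 (LinearMap.range A₂.mulVecLin) = r₂' := hr₂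
    obtain ⟨f', g', c1, c2, c3, q1, q2⟩ := aux_main A₁.mulVecLin A₂.mulVecLin
      (by rw [← Matrix.mulVecLin_mul, hcomp, Matrix.mulVecLin_zero]) k l
      (by rw [e1, Module.finrank_fin_fun]; omega) (by rw [e2, Module.finrank_fin_fun]; omega)
      (by rw [e1, e2, Module.finrank_fin_fun]; omega)
    obtain ⟨B₁, rfl⟩ : ∃ B : Matrix (Fin a₂) (Fin a₁) 𝕜, B.mulVecLin = f' :=
      ⟨LinearMap.toMatrix' f', Matrix.toLin'_toMatrix' f'⟩
    obtain ⟨B₂, rfl⟩ : ∃ B : Matrix (Fin a₃) (Fin a₂) 𝕜, B.mulVecLin = g' :=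
      ⟨LinearMap.toMatrix' g', Matrix.toLin'_toMatrix' g'⟩
    have inj : ∀ M : Matrix (Fin a₃) (Fin a₁) 𝕜, M.mulVecLin = 0 → M = 0 := by
      intro M hM
      have h0 : LinearMap.toMatrix' M.mulVecLin = M := LinearMap.toMatrix'_toLin' M
      rw [← h0, hM, map_zero]
    rw [← Matrix.mulVecLin_mul] at c1 c2 c3
    have d1 := inj _ c1
    have d2 := inj _ c2
    have d3 := inj _ c3
    have hev : ∀ {m n : ℕ} (A B : Matrix (Fin m) (Fin n) 𝕜) (t : 𝕜),
        (Matrix.of fun i j => Polynomial.C (A i j) + Polynomial.X * Polynomial.C (B i j)).map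
          (Polynomial.eval t) = A + t • B := by
      intro m n A B t
      ext i j
      simp; ring
    have hlin : ∀ {m n : ℕ} (A B : Matrix (Fin m) (Fin n) 𝕜) (t : 𝕜),
        (A + t • B).mulVecLin = A.mulVecLin + t • B.mulVecLin := by
      intro m n A B t
      apply LinearMap.ext
      intro x
      simp
    refine ⟨Matrix.of fun i j => Polynomial.C (A₁ i j) + Polynomial.X * Polynomial.C (B₁ i j),
      Matrix.of fun i j => Polynomial.C (A₂ i j) + Polynomial.X * Polynomial.C (B₂ i j),
      ?_, ?_, ?_, ?_⟩
    · intro t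
      rw [hev, hev]
      simp [Matrix.add_mul, Matrix.mul_add, hcomp, d1, d2, d3]
    · rw [hev]; simp
    · rw [hev]; simp
    · intro t ht
      rw [hev, hev]
      refine ⟨?_, ?_⟩
      · rw [Matrix.rank, hlin, q1 t ht, e1]
      · rw [Matrix.rank, hlin, q2 t ht, e2]
end

section
/- Let $\Bbbk$ be an algebraically closed field. For a dimension vector $(\nu_1,\nu_2,\nu_3,\nu_4)$ of the $2\times 2$ commutative grid with $\nu_1 + \nu_4 \geq \nu_2 + \nu_3$, the number of irreducible components of the representation variety $E_C(\nu)$ equals the number of pairs $(r_1, r_2) \in \mathbb{N}^2$ with $r_1 + r_2 = \nu_2 + \nu_3$, $0 \leq r_1 \leq \nu_1$, $0 \leq r_2 \leq \nu_4$; that is, it equals $\min\{\nu_1, \nu_2+\nu_3\} - \max\{0, \nu_2+\nu_3-\nu_4\} + 1$. -/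
/-- The ambient affine space of quadruples of matrices for the `2 × 2` grid. -/
abbrev GridAmb (𝕜 : Type) [Field 𝕜] (ν₁ ν₂ ν₃ ν₄ : ℕ) : Type :=
  Matrix (Fin ν₂) (Fin ν₁) 𝕜 × Matrix (Fin ν₃) (Fin ν₁) 𝕜 ×
    Matrix (Fin ν₄) (Fin ν₂) 𝕜 × Matrix (Fin ν₄) (Fin ν₃) 𝕜

/-- The coordinate functions on the ambient affine space. -/
def gridCoords (𝕜 : Type) [Field 𝕜] (ν₁ ν₂ ν₃ ν₄ : ℕ) :
    Set (GridAmb 𝕜 ν₁ ν₂ ν₃ ν₄ → 𝕜) :=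
  {φ | (∃ i j, φ = fun x => x.1 i j) ∨ (∃ i j, φ = fun x => x.2.1 i j) ∨
    (∃ i j, φ = fun x => x.2.2.1 i j) ∨ (∃ i j, φ = fun x => x.2.2.2 i j)}

/-- The Zariski topology on the ambient affine space: generated by the nonvanishing loci of
polynomial functions (elements of the `𝕜`-subalgebra generated by the coordinates). -/
def gridZariski (𝕜 : Type) [Field 𝕜] (ν₁ ν₂ ν₃ ν₄ : ℕ) :
    TopologicalSpace (GridAmb 𝕜 ν₁ ν₂ ν₃ ν₄) :=
  TopologicalSpace.generateFrom
    {U | ∃ p ∈ Algebra.adjoin 𝕜 (gridCoords 𝕜 ν₁ ν₂ ν₃ ν₄), U = {x | p x ≠ 0}}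

open Polynomial in
/-- A curve of matrices with polynomial entries. -/
def PolyMat {𝕜 : Type} [Field 𝕜] {m n : Type*} (h : 𝕜 → Matrix m n 𝕜) : Prop :=
  ∃ P : Matrix m n 𝕜[X], ∀ t, h t = P.map (Polynomial.evalRingHom t)

section PolyMat
variable {𝕜 : Type} [Field 𝕜] {m n o : Type*}

theorem PolyMat.const (A : Matrix m n 𝕜) : PolyMat (fun _ : 𝕜 => A) :=
  ⟨A.map Polynomial.C, fun t => by ext i j; simp⟩

theorem PolyMat.line (A B : Matrix m n 𝕜) : PolyMat (fun t : 𝕜 => A + t • (B - A)) :=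
  ⟨Matrix.of fun i j => Polynomial.C (A i j) + Polynomial.X * Polynomial.C (B i j - A i j),
    fun t => by ext i j; simp⟩

theorem PolyMat.mul [Fintype n] {f : 𝕜 → Matrix m n 𝕜} {g : 𝕜 → Matrix n o 𝕜}
    (hf : PolyMat f) (hg : PolyMat g) : PolyMat (fun t => f t * g t) := by
  obtain ⟨P, hP⟩ := hf
  obtain ⟨Q, hQ⟩ := hg
  exact ⟨P * Q, fun t => by simp only [hP, hQ, Matrix.map_mul]⟩

theorem PolyMat.adjugate [Fintype n] [DecidableEq n] {f : 𝕜 → Matrix n n 𝕜}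
    (hf : PolyMat f) : PolyMat (fun t => (f t).adjugate) := by
  obtain ⟨P, hP⟩ := hf
  refine ⟨P.adjugate, fun t => ?_⟩
  have := RingHom.map_adjugate (Polynomial.evalRingHom t) P
  simp only [hP]
  exact this.symm

theorem PolyMat.entry {f : 𝕜 → Matrix m n 𝕜} (hf : PolyMat f) (i : m) (j : n) :
    ∃ p : Polynomial 𝕜, ∀ t, f t i j = p.eval t := by
  obtain ⟨P, hP⟩ := hf
  exact ⟨P i j, fun t => by rw [hP]; simp⟩

end PolyMat

section Top
variable {𝕜 : Type} [Field 𝕜] {ν₁ ν₂ ν₃ ν₄ : ℕ}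

theorem adjoin_curve (γ : 𝕜 → GridAmb 𝕜 ν₁ ν₂ ν₃ ν₄)
    (hγ : ∀ φ ∈ gridCoords 𝕜 ν₁ ν₂ ν₃ ν₄, ∃ P : Polynomial 𝕜, ∀ t, φ (γ t) = P.eval t)
    (p : GridAmb 𝕜 ν₁ ν₂ ν₃ ν₄ → 𝕜) (hp : p ∈ Algebra.adjoin 𝕜 (gridCoords 𝕜 ν₁ ν₂ ν₃ ν₄)) :
    ∃ P : Polynomial 𝕜, ∀ t, p (γ t) = P.eval t := by
  induction hp using Algebra.adjoin_induction with
  | mem x hx => exact hγ x hx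
  | algebraMap r => exact ⟨Polynomial.C r, fun t => by simp⟩
  | add x y _ _ hx hy =>
    obtain ⟨P, hP⟩ := hx
    obtain ⟨Q, hQ⟩ := hy
    exact ⟨P + Q, fun t => by simp [hP, hQ]⟩
  | mul x y _ _ hx hy =>
    obtain ⟨P, hP⟩ := hx
    obtain ⟨Q, hQ⟩ := hy
    exact ⟨P * Q, fun t => by simp [hP, hQ]⟩

theorem grid_basis : @TopologicalSpace.IsTopologicalBasis _ (gridZariski 𝕜 ν₁ ν₂ ν₃ ν₄)
    {U | ∃ p ∈ Algebra.adjoin 𝕜 (gridCoords 𝕜 ν₁ ν₂ ν₃ ν₄), U = {x | p x ≠ 0}} := by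
  letI : TopologicalSpace (GridAmb 𝕜 ν₁ ν₂ ν₃ ν₄) := gridZariski 𝕜 ν₁ ν₂ ν₃ ν₄
  refine TopologicalSpace.isTopologicalBasis_of_subbasis_of_finiteInter rfl ⟨?_, ?_⟩
  · exact ⟨1, one_mem _, by ext; simp⟩
  · rintro _ ⟨p, hp, rfl⟩ _ ⟨q, hq, rfl⟩
    exact ⟨p * q, mul_mem hp hq, by ext; simp⟩

theorem preirr_of_curves [Infinite 𝕜] (Q : GridAmb 𝕜 ν₁ ν₂ ν₃ ν₄ → Prop)
    (S : Set {x // Q x})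
    (hS : ∀ a ∈ S, ∀ b ∈ S, ∃ γ : 𝕜 → {x // Q x},
      (∀ φ ∈ gridCoords 𝕜 ν₁ ν₂ ν₃ ν₄, ∃ P : Polynomial 𝕜, ∀ t, φ (γ t) = P.eval t) ∧
      (∀ t, γ t ∈ S) ∧ γ 0 = a ∧ γ 1 = b) :
    letI : TopologicalSpace (GridAmb 𝕜 ν₁ ν₂ ν₃ ν₄) := gridZariski 𝕜 ν₁ ν₂ ν₃ ν₄
    IsPreirreducible S := by
  letI : TopologicalSpace (GridAmb 𝕜 ν₁ ν₂ ν₃ ν₄) := gridZariski 𝕜 ν₁ ν₂ ν₃ ν₄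
  intro U V hU hV hSU hSV
  obtain ⟨U, hU', rfl⟩ := isOpen_induced_iff.1 hU
  obtain ⟨V, hV', rfl⟩ := isOpen_induced_iff.1 hV
  obtain ⟨a, haS, haU⟩ := hSU
  obtain ⟨b, hbS, hbV⟩ := hSV
  obtain ⟨_, ⟨p, hp, rfl⟩, hap, hpU⟩ := grid_basis.exists_subset_of_mem_open (show a.1 ∈ U from haU) hU'
  obtain ⟨_, ⟨q, hq, rfl⟩, hbq, hqV⟩ := grid_basis.exists_subset_of_mem_open (show b.1 ∈ V from hbV) hV'
  obtain ⟨γ, hγ, hγS, h0, h1⟩ := hS a haS b hbS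
  obtain ⟨P, hP⟩ := adjoin_curve (fun t => (γ t).1) hγ p hp
  obtain ⟨R, hR⟩ := adjoin_curve (fun t => (γ t).1) hγ q hq
  have hP0 : P ≠ 0 := by
    rintro rfl
    apply hap
    have := hP 0
    simpa [h0] using this
  have hR0 : R ≠ 0 := by
    rintro rfl
    apply hbq
    have := hR 1
    simpa [h1] using this
  obtain ⟨t, ht⟩ : ∃ t, (P * R).eval t ≠ 0 := by
    by_contra! h
    exact mul_ne_zero hP0 hR0 (Polynomial.funext (by simpa using h))
  rw [Polynomial.eval_mul] at ht
  refine ⟨γ t, hγS t, hpU ?_, hqV ?_⟩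
  · change p (γ t).1 ≠ 0
    rw [hP]; exact left_ne_zero_of_mul ht
  · change q (γ t).1 ≠ 0
    rw [hR]; exact right_ne_zero_of_mul ht

end Top

theorem components_eq {X ι : Type*} [TopologicalSpace X] (I : Finset ι) (S : ι → Set X)
    (hirr : ∀ i ∈ I, IsIrreducible (S i)) (hcov : ∀ x, ∃ i ∈ I, x ∈ S i)
    (hne : ∀ i ∈ I, ∀ j ∈ I, i ≠ j → ¬ S i ⊆ closure (S j)) :
    (irreducibleComponents X).ncard = I.card := by
  classical
  have key : ∀ T : Set X, IsIrreducible T → ∃ i ∈ I, T ⊆ closure (S i) := by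
    intro T hT
    obtain ⟨z, hz, hTz⟩ := isIrreducible_iff_sUnion_isClosed.1 hT
      (I.image fun i => closure (S i)) (by
        intro z hz
        obtain ⟨i, _, rfl⟩ := Finset.mem_image.1 hz
        exact isClosed_closure) (by
        intro x _
        obtain ⟨i, hi, hx⟩ := hcov x
        exact ⟨closure (S i), by simpa using ⟨i, hi, rfl⟩, subset_closure hx⟩)
    obtain ⟨i, hi, rfl⟩ := Finset.mem_image.1 hz
    exact ⟨i, hi, hTz⟩
  have himg : irreducibleComponents X = (fun i => closure (S i)) '' (I : Set ι) := by
    ext T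
    constructor
    · intro hT
      obtain ⟨i, hi, hTi⟩ := key T hT.1
      exact ⟨i, hi, (hT.2 (hirr i hi).closure hTi).antisymm hTi⟩
    · rintro ⟨i, hi, rfl⟩
      refine ⟨(hirr i hi).closure, fun T hT hiT => ?_⟩
      obtain ⟨j, hj, hTj⟩ := key T hT
      by_cases hij : i = j
      · subst hij; exact hTj
      · exact absurd (subset_closure.trans (hiT.trans hTj)) (hne i hi j hj hij)
  rw [himg, Set.InjOn.ncard_image, Set.ncard_coe_finset]
  intro i hi j hj hij
  by_contra h
  exact hne i hi j hj h (subset_closure.trans hij.le)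

section LinAlg
variable {𝕜 : Type} [Field 𝕜]

theorem exists_sub_between {V : Type*} [AddCommGroup V] [Module 𝕜 V] [FiniteDimensional 𝕜 V]
    (A B : Submodule 𝕜 V) (hAB : A ≤ B) (k : ℕ) (h : Module.finrank 𝕜 A + k ≤ Module.finrank 𝕜 B) :
    ∃ W : Submodule 𝕜 V, A ≤ W ∧ W ≤ B ∧ Module.finrank 𝕜 W = Module.finrank 𝕜 A + k := by
  induction k with
  | zero => exact ⟨A, le_rfl, hAB, rfl⟩
  | succ k ih =>
    obtain ⟨W, hAW, hWB, hW⟩ := ih (by omega)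
    have hlt : W < B := lt_of_le_of_ne hWB (by rintro rfl; omega)
    obtain ⟨v, hvB, hvW⟩ := SetLike.exists_of_lt hlt
    refine ⟨W ⊔ Submodule.span 𝕜 {v}, hAW.trans le_sup_left,
      sup_le hWB (by simpa using hvB), ?_⟩
    have hv0 : v ≠ 0 := by rintro rfl; exact hvW W.zero_mem
    have h1 := Submodule.finrank_sup_add_finrank_inf_eq W (Submodule.span 𝕜 {v})
    have h2 : W ⊓ Submodule.span 𝕜 {v} = ⊥ := by
      rw [← disjoint_iff]
      exact (Submodule.disjoint_span_singleton' hv0).2 hvW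
    rw [h2, finrank_span_singleton hv0] at h1
    simp at h1
    omega

/-- coordinate projection -/
def coordProj (𝕜 : Type) [Field 𝕜] {n : ℕ} {ι : Type} [DecidableEq ι] (e : ι ≃ Fin n) (r : ℕ) :
    Matrix ι ι 𝕜 := Matrix.diagonal fun i => if (e i : ℕ) < r then 1 else 0

variable {n : ℕ} {ι : Type} [DecidableEq ι] [Fintype ι] (e : ι ≃ Fin n)

theorem coordProj_rank (r : ℕ) (hr : r ≤ n) : (coordProj 𝕜 e r).rank = r := by
  classical
  rw [coordProj, Matrix.rank_diagonal]
  rw [← Fintype.card_fin r]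
  refine Fintype.card_congr ⟨fun i => ⟨e i.1, ?_⟩, fun j => ⟨e.symm (Fin.castLE hr j), ?_⟩, ?_, ?_⟩
  · have := i.2
    simpa using this
  · simp
  · intro i; simp
  · intro j; simp

theorem coordProj_compl_rank (r : ℕ) (hr : r ≤ n) : (1 - coordProj 𝕜 e r).rank ≤ n - r := by
  classical
  have h1 : (1 - coordProj 𝕜 e r) =
      Matrix.diagonal fun i => if (e i : ℕ) < r then (0 : 𝕜) else 1 := by
    rw [coordProj, ← Matrix.diagonal_one, Matrix.diagonal_sub]
    congr 1; ext i; split_ifs <;> simp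
  rw [h1, Matrix.rank_diagonal]
  rw [← Fintype.card_fin (n - r)]
  refine Fintype.card_le_of_injective
    (fun i : {i // (if (e i : ℕ) < r then (0 : 𝕜) else 1) ≠ 0} =>
      (⟨e i.1 - r, by have := i.2; have h := (e i.1).2; simp at this; omega⟩ : Fin (n - r))) ?_
  rintro ⟨i, hi⟩ ⟨j, hj⟩ hij
  simp at hi hj hij
  apply Subtype.ext
  apply e.injective
  apply Fin.ext
  change (e i : ℕ) = e j
  omega

theorem coordProj_idem (r : ℕ) : coordProj 𝕜 e r * coordProj 𝕜 e r = coordProj 𝕜 e r := by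
  rw [coordProj, Matrix.diagonal_mul_diagonal]
  congr 1; ext i; split_ifs <;> simp

theorem exists_adapted (r : ℕ) (hr : r ≤ n) (W : Submodule 𝕜 (ι → 𝕜))
    (hW : Module.finrank 𝕜 W = r) :
    ∃ g h : Matrix ι ι 𝕜, g * h = 1 ∧ (∀ v, (g * coordProj 𝕜 e r).mulVec v ∈ W) ∧
      ∀ w ∈ W, (coordProj 𝕜 e r * h).mulVec w = h.mulVec w := by
  set P := coordProj 𝕜 e r with hP
  have hid : IsIdempotentElem (Matrix.toLin' P) := by
    change Matrix.toLin' P * Matrix.toLin' P = _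
    rw [Module.End.mul_eq_comp, ← Matrix.toLin'_mul, coordProj_idem]
  have hc := LinearMap.IsIdempotentElem.isCompl hid
  obtain ⟨W', hW'⟩ := W.exists_isCompl
  have f1 : Module.finrank 𝕜 (LinearMap.range (Matrix.toLin' P)) = r := by
    have := coordProj_rank (𝕜 := 𝕜) e r hr
    rw [Matrix.rank] at this
    exact this
  have f2 := Submodule.finrank_add_eq_of_isCompl hc
  have f3 := Submodule.finrank_add_eq_of_isCompl hW'
  let ψ := LinearEquiv.ofFinrankEq (R := 𝕜) (LinearMap.range (Matrix.toLin' P)) W (by omega)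
  let ψ' := LinearEquiv.ofFinrankEq (R := 𝕜) (LinearMap.ker (Matrix.toLin' P)) W' (by omega)
  let E : (ι → 𝕜) ≃ₗ[𝕜] (ι → 𝕜) :=
    (Submodule.prodEquivOfIsCompl _ _ hc).symm ≪≫ₗ (ψ.prodCongr ψ') ≪≫ₗ
      (Submodule.prodEquivOfIsCompl _ _ hW')
  have hE : ∀ u : LinearMap.range (Matrix.toLin' P), E u = ψ u := by
    intro u
    simp [E]
  refine ⟨LinearMap.toMatrix' E.toLinearMap, LinearMap.toMatrix' E.symm.toLinearMap, ?_, ?_, ?_⟩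
  · rw [← LinearMap.toMatrix'_comp]; simp
  · intro v
    rw [← Matrix.mulVec_mulVec, LinearMap.toMatrix'_mulVec]
    have := hE ⟨P.mulVec v, ⟨v, by simp⟩⟩
    change E (P.mulVec v) ∈ W
    rw [this]
    exact (ψ _).2
  · intro w hw
    rw [← Matrix.mulVec_mulVec, LinearMap.toMatrix'_mulVec]
    have h1 := hE (ψ.symm ⟨w, hw⟩)
    rw [LinearEquiv.apply_symm_apply] at h1
    have h2 : E.symm w = ψ.symm ⟨w, hw⟩ := by
      rw [LinearEquiv.symm_apply_eq]; exact h1.symm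
    change P.mulVec (E.symm w) = E.symm w
    rw [h2]
    have := (LinearMap.IsIdempotentElem.mem_range_iff hid).1 (ψ.symm ⟨w, hw⟩).2
    simpa using this

theorem exists_param {p q : Type} [Fintype p] [Fintype q] [DecidableEq p] [DecidableEq q]
    (M : Matrix ι p 𝕜) (N : Matrix q ι 𝕜) (hNM : N * M = 0)
    (r : ℕ) (h1 : M.rank ≤ r) (h2 : N.rank + r ≤ n) :
    ∃ (g : Matrix ι ι 𝕜) (X : Matrix ι p 𝕜) (Y : Matrix q ι 𝕜),
      M = g * coordProj 𝕜 e r * X ∧ N = Y * (1 - coordProj 𝕜 e r) * g.adjugate := by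
  have hle : LinearMap.range M.mulVecLin ≤ LinearMap.ker N.mulVecLin := by
    rintro _ ⟨v, rfl⟩
    simp [Matrix.mulVec_mulVec, hNM]
  have hrn := LinearMap.finrank_range_add_finrank_ker N.mulVecLin
  have hcard : Module.finrank 𝕜 (ι → 𝕜) = n := by
    rw [Module.finrank_fintype_fun_eq_card, Fintype.card_congr e, Fintype.card_fin]
  rw [hcard] at hrn
  change N.rank + _ = n at hrn
  obtain ⟨W, hMW, hWN, hW⟩ := exists_sub_between _ _ hle (r - M.rank) (by
    change M.rank + _ ≤ _; omega)
  change _ = M.rank + _ at hW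
  obtain ⟨g, h, hgh, hg, hh⟩ := exists_adapted e r (by omega) W (by omega)
  have hhM : coordProj 𝕜 e r * (h * M) = h * M := by
    apply Matrix.toLin'.injective
    ext1 v
    ext1
    simp only [LinearMap.comp_apply, Matrix.toLin'_apply]
    have := hh (M.mulVec (LinearMap.single 𝕜 _ v 1)) (hMW ⟨_, rfl⟩)
    rw [Matrix.mulVec_mulVec, Matrix.mulVec_mulVec] at this
    rw [← Matrix.mul_assoc]; exact this
  have hNg : N * g * coordProj 𝕜 e r = 0 := by
    apply Matrix.toLin'.injective
    ext1 v
    ext1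
    simp only [LinearMap.comp_apply, Matrix.toLin'_apply]
    have := hWN (hg (LinearMap.single 𝕜 _ v 1))
    rw [LinearMap.mem_ker, Matrix.mulVecLin_apply, Matrix.mulVec_mulVec] at this
    rw [Matrix.mul_assoc, this, Matrix.zero_mulVec]
  have hdet : g.det ≠ 0 := by
    intro h0
    have := congrArg Matrix.det hgh
    rw [Matrix.det_mul, h0] at this
    simp at this
  refine ⟨g, h * M, g.det⁻¹ • (N * g), ?_, ?_⟩
  · rw [Matrix.mul_assoc, hhM, ← Matrix.mul_assoc, hgh, Matrix.one_mul]
  · rw [Matrix.mul_sub, Matrix.smul_mul _ _ (coordProj 𝕜 e r), hNg]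
    simp [Matrix.mul_assoc, Matrix.mul_adjugate, hdet]

end LinAlg

section Strata
variable {𝕜 : Type} [Field 𝕜] {ν₁ ν₂ ν₃ ν₄ : ℕ}

/-- the index equivalence -/
abbrev gE (a b : ℕ) : Fin a ⊕ Fin b ≃ Fin (a + b) := finSumFinEquiv

/-- stacked first maps -/
def gM (x : GridAmb 𝕜 ν₁ ν₂ ν₃ ν₄) : Matrix (Fin ν₂ ⊕ Fin ν₃) (Fin ν₁) 𝕜 :=
  Matrix.fromRows x.1 x.2.1

/-- stacked second maps -/
def gN (x : GridAmb 𝕜 ν₁ ν₂ ν₃ ν₄) : Matrix (Fin ν₄) (Fin ν₂ ⊕ Fin ν₃) 𝕜 :=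
  Matrix.fromCols x.2.2.1 (-x.2.2.2)

theorem gN_mul_gM (x : GridAmb 𝕜 ν₁ ν₂ ν₃ ν₄) :
    gN x * gM x = 0 ↔ x.2.2.1 * x.1 = x.2.2.2 * x.2.1 := by
  rw [gN, gM, Matrix.fromCols_mul_fromRows, Matrix.neg_mul, ← sub_eq_add_neg, sub_eq_zero]

/-- unstacking -/
def unst (M : Matrix (Fin ν₂ ⊕ Fin ν₃) (Fin ν₁) 𝕜) (N : Matrix (Fin ν₄) (Fin ν₂ ⊕ Fin ν₃) 𝕜) :
    GridAmb 𝕜 ν₁ ν₂ ν₃ ν₄ := (M.toRows₁, M.toRows₂, N.toCols₁, -N.toCols₂)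

theorem gM_unst (M : Matrix (Fin ν₂ ⊕ Fin ν₃) (Fin ν₁) 𝕜)
    (N : Matrix (Fin ν₄) (Fin ν₂ ⊕ Fin ν₃) 𝕜) : gM (unst M N) = M := by
  simp [gM, unst]

theorem gN_unst (M : Matrix (Fin ν₂ ⊕ Fin ν₃) (Fin ν₁) 𝕜)
    (N : Matrix (Fin ν₄) (Fin ν₂ ⊕ Fin ν₃) 𝕜) : gN (unst M N) = N := by
  simp [gN, unst]

theorem unst_eq (x : GridAmb 𝕜 ν₁ ν₂ ν₃ ν₄) : unst (gM x) (gN x) = x := by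
  simp [gM, gN, unst]

theorem unst_mem {M : Matrix (Fin ν₂ ⊕ Fin ν₃) (Fin ν₁) 𝕜}
    {N : Matrix (Fin ν₄) (Fin ν₂ ⊕ Fin ν₃) 𝕜} (h : N * M = 0) :
    (unst M N).2.2.1 * (unst M N).1 = (unst M N).2.2.2 * (unst M N).2.1 := by
  rw [← gN_mul_gM, gM_unst, gN_unst, h]

/-- the stratum with ranks at most `r` and `ν₂ + ν₃ - r` -/
def stratum (𝕜 : Type) [Field 𝕜] (ν₁ ν₂ ν₃ ν₄ r : ℕ) :
    Set {x : GridAmb 𝕜 ν₁ ν₂ ν₃ ν₄ // x.2.2.1 * x.1 = x.2.2.2 * x.2.1} :=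
  {x | ∃ (g : Matrix (Fin ν₂ ⊕ Fin ν₃) (Fin ν₂ ⊕ Fin ν₃) 𝕜)
      (X : Matrix (Fin ν₂ ⊕ Fin ν₃) (Fin ν₁) 𝕜) (Y : Matrix (Fin ν₄) (Fin ν₂ ⊕ Fin ν₃) 𝕜),
      gM x.1 = g * coordProj 𝕜 (gE ν₂ ν₃) r * X ∧
      gN x.1 = (Y * (1 - coordProj 𝕜 (gE ν₂ ν₃) r) * g.adjugate :
        Matrix (Fin ν₄) (Fin ν₂ ⊕ Fin ν₃) 𝕜)}

theorem param_mul {n : ℕ} {ι p q : Type} [DecidableEq ι] [Fintype ι] (e : ι ≃ Fin n) (r : ℕ)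
    (g : Matrix ι ι 𝕜) (X : Matrix ι p 𝕜) (Y : Matrix q ι 𝕜) :
    (Y * (1 - coordProj 𝕜 e r) * g.adjugate) * (g * coordProj 𝕜 e r * X) = 0 := by
  have h : (1 - coordProj 𝕜 e r) * coordProj 𝕜 e r = 0 := by
    rw [Matrix.sub_mul, coordProj_idem, Matrix.one_mul, sub_self]
  calc _ = Y * ((1 - coordProj 𝕜 e r) * (g.adjugate * g) * coordProj 𝕜 e r) * X := by
        simp only [Matrix.mul_assoc]
    _ = 0 := by
        rw [Matrix.adjugate_mul, Matrix.mul_smul, Matrix.smul_mul, Matrix.mul_one, h]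
        simp

theorem stratum_preirr [Infinite 𝕜] (r : ℕ) :
    letI : TopologicalSpace (GridAmb 𝕜 ν₁ ν₂ ν₃ ν₄) := gridZariski 𝕜 ν₁ ν₂ ν₃ ν₄
    IsPreirreducible (stratum 𝕜 ν₁ ν₂ ν₃ ν₄ r) := by
  apply preirr_of_curves
  rintro a ⟨g, X, Y, hM, hN⟩ b ⟨g', X', Y', hM', hN'⟩
  let P : Matrix (Fin ν₂ ⊕ Fin ν₃) (Fin ν₂ ⊕ Fin ν₃) 𝕜 := coordProj 𝕜 (gE ν₂ ν₃) r
  let M : 𝕜 → Matrix (Fin ν₂ ⊕ Fin ν₃) (Fin ν₁) 𝕜 := fun t =>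
    (g + t • (g' - g)) * P * (X + t • (X' - X))
  let N : 𝕜 → Matrix (Fin ν₄) (Fin ν₂ ⊕ Fin ν₃) 𝕜 := fun t =>
    (Y + t • (Y' - Y)) * (1 - P) * (g + t • (g' - g)).adjugate
  have hMp : PolyMat M := ((PolyMat.line _ _).mul (PolyMat.const _)).mul (PolyMat.line _ _)
  have hNp : PolyMat N :=
    ((PolyMat.line _ _).mul (PolyMat.const _)).mul (PolyMat.line _ _).adjugate
  refine ⟨fun t => ⟨unst (M t) (N t), unst_mem (param_mul _ _ _ _ _)⟩, ?_, ?_, ?_, ?_⟩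
  · rintro φ (⟨i, j, rfl⟩ | ⟨i, j, rfl⟩ | ⟨i, j, rfl⟩ | ⟨i, j, rfl⟩)
    · exact hMp.entry (Sum.inl i) j
    · exact hMp.entry (Sum.inr i) j
    · exact hNp.entry i (Sum.inl j)
    · obtain ⟨p, hp⟩ := hNp.entry i (Sum.inr j)
      refine ⟨-p, fun t => ?_⟩
      rw [Polynomial.eval_neg, ← hp]
      rfl
  · intro t
    exact ⟨_, _, _, gM_unst _ _, gN_unst _ _⟩
  · apply Subtype.ext
    change unst (M 0) (N 0) = a.1
    have h1 : M 0 = gM a.1 := by simp [M, hM, P]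
    have h2 : N 0 = gN a.1 := by simp [N, hN, P]
    rw [h1, h2, unst_eq]
  · apply Subtype.ext
    change unst (M 1) (N 1) = b.1
    have h1 : M 1 = gM b.1 := by simp [M, hM', P]
    have h2 : N 1 = gN b.1 := by simp [N, hN', P]
    rw [h1, h2, unst_eq]

theorem gM_entry_mem (i j) : (fun x : GridAmb 𝕜 ν₁ ν₂ ν₃ ν₄ => gM x i j) ∈
    Algebra.adjoin 𝕜 (gridCoords 𝕜 ν₁ ν₂ ν₃ ν₄) := by
  apply Algebra.subset_adjoin
  rcases i with i | i
  · exact Or.inl ⟨i, j, rfl⟩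
  · exact Or.inr (Or.inl ⟨i, j, rfl⟩)

theorem gN_entry_mem (i j) : (fun x : GridAmb 𝕜 ν₁ ν₂ ν₃ ν₄ => gN x i j) ∈
    Algebra.adjoin 𝕜 (gridCoords 𝕜 ν₁ ν₂ ν₃ ν₄) := by
  rcases j with j | j
  · exact Algebra.subset_adjoin (Or.inr (Or.inr (Or.inl ⟨i, j, rfl⟩)))
  · have : (fun x : GridAmb 𝕜 ν₁ ν₂ ν₃ ν₄ => x.2.2.2 i j) ∈
      Algebra.adjoin 𝕜 (gridCoords 𝕜 ν₁ ν₂ ν₃ ν₄) :=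
      Algebra.subset_adjoin (Or.inr (Or.inr (Or.inr ⟨i, j, rfl⟩)))
    exact neg_mem this

theorem det_mem_subalgebra {T : Type} (S : Subalgebra 𝕜 (T → 𝕜)) {k : ℕ}
    (F : T → Matrix (Fin k) (Fin k) 𝕜) (hF : ∀ i j, (fun x => F x i j) ∈ S) :
    (fun x => (F x).det) ∈ S := by
  have : (fun x => (F x).det) = ∑ σ : Equiv.Perm (Fin k),
      ((Equiv.Perm.sign σ : ℤ) : 𝕜) • ∏ i, (fun x => F x (σ i) i) := by
    ext x
    simp [Matrix.det_apply', Finset.sum_apply, Finset.prod_apply]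
  rw [this]
  exact sum_mem fun σ _ => S.smul_mem (prod_mem fun i _ => hF _ _) _

theorem not_subset_closure (Q : GridAmb 𝕜 ν₁ ν₂ ν₃ ν₄ → Prop) (S T : Set {x // Q x})
    (p : GridAmb 𝕜 ν₁ ν₂ ν₃ ν₄ → 𝕜) (hp : p ∈ Algebra.adjoin 𝕜 (gridCoords 𝕜 ν₁ ν₂ ν₃ ν₄))
    (hT : ∀ x ∈ T, p x.1 = 0) (hS : ∃ x ∈ S, p x.1 ≠ 0) :
    letI : TopologicalSpace (GridAmb 𝕜 ν₁ ν₂ ν₃ ν₄) := gridZariski 𝕜 ν₁ ν₂ ν₃ ν₄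
    ¬ S ⊆ closure T := by
  letI : TopologicalSpace (GridAmb 𝕜 ν₁ ν₂ ν₃ ν₄) := gridZariski 𝕜 ν₁ ν₂ ν₃ ν₄
  intro h
  obtain ⟨x, hxS, hx⟩ := hS
  have hop : IsOpen {y : {x // Q x} | p y.1 ≠ 0} :=
    isOpen_induced_iff.2 ⟨{y | p y ≠ 0}, TopologicalSpace.isOpen_generateFrom_of_mem ⟨p, hp, rfl⟩, rfl⟩
  obtain ⟨y, hy, hyT⟩ := mem_closure_iff.1 (h hxS) _ hop hx
  exact hy (hT y hyT)

theorem det_submatrix_zero {m n : Type*} [Fintype m] [Fintype n] {k : ℕ} (A : Matrix m n 𝕜)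
    (f : Fin k → m) (g : Fin k → n) (h : A.rank < k) : (A.submatrix f g).det = 0 := by
  by_contra hd
  have h1 := Matrix.rank_of_isUnit (A.submatrix f g)
    ((Matrix.isUnit_iff_isUnit_det _).2 (isUnit_iff_ne_zero.2 hd))
  have h2 := Matrix.rank_submatrix_le A f g
  rw [Fintype.card_fin] at h1
  omega

theorem stratum_rank {r : ℕ} (hr : r ≤ ν₂ + ν₃)
    {x : {x : GridAmb 𝕜 ν₁ ν₂ ν₃ ν₄ // x.2.2.1 * x.1 = x.2.2.2 * x.2.1}}
    (hx : x ∈ stratum 𝕜 ν₁ ν₂ ν₃ ν₄ r) :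
    (gM x.1).rank ≤ r ∧ (gN x.1).rank ≤ ν₂ + ν₃ - r := by
  obtain ⟨g, X, Y, hM, hN⟩ := hx
  rw [hM, hN]
  constructor
  · exact ((Matrix.rank_mul_le_left _ _).trans (Matrix.rank_mul_le_right _ _)).trans
      (coordProj_rank _ r hr).le
  · exact ((Matrix.rank_mul_le_left _ _).trans (Matrix.rank_mul_le_right _ _)).trans
      (coordProj_compl_rank _ r hr)

theorem stratum_sep_M {r s : ℕ} (hr : r ≤ ν₂ + ν₃) (hr1 : r ≤ ν₁) (hs : s < r) :
    letI : TopologicalSpace (GridAmb 𝕜 ν₁ ν₂ ν₃ ν₄) := gridZariski 𝕜 ν₁ ν₂ ν₃ ν₄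
    ¬ stratum 𝕜 ν₁ ν₂ ν₃ ν₄ r ⊆ closure (stratum 𝕜 ν₁ ν₂ ν₃ ν₄ s) := by
  let f : Fin r → Fin ν₂ ⊕ Fin ν₃ := fun i => finSumFinEquiv.symm (Fin.castLE hr i)
  let c : Fin r → Fin ν₁ := Fin.castLE hr1
  apply not_subset_closure _ _ _ (fun x => ((gM x).submatrix f c).det)
  · exact det_mem_subalgebra _ _ fun i j => gM_entry_mem _ _
  · intro x hx
    exact det_submatrix_zero _ _ _ (((stratum_rank (by omega) hx).1).trans_lt hs)
  · let X : Matrix (Fin ν₂ ⊕ Fin ν₃) (Fin ν₁) 𝕜 :=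
      Matrix.of fun i j => if (finSumFinEquiv i : ℕ) = j then 1 else 0
    refine ⟨⟨unst (1 * coordProj 𝕜 (gE ν₂ ν₃) r * X)
      (0 * (1 - coordProj 𝕜 (gE ν₂ ν₃) r) * (1 : Matrix _ _ 𝕜).adjugate),
      unst_mem (param_mul _ _ _ _ _)⟩, ⟨_, _, _, gM_unst _ _, gN_unst _ _⟩, ?_⟩
    simp only [gM_unst]
    have : (1 * coordProj 𝕜 (gE ν₂ ν₃) r * X).submatrix f c = 1 := by
      ext i j
      simp [coordProj, X, f, c, Matrix.one_apply, Fin.ext_iff]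
    rw [this]
    simp

theorem stratum_sep_N {r s : ℕ} (hs : s ≤ ν₂ + ν₃) (hr1 : ν₂ + ν₃ - r ≤ ν₄) (hrs : r < s) :
    letI : TopologicalSpace (GridAmb 𝕜 ν₁ ν₂ ν₃ ν₄) := gridZariski 𝕜 ν₁ ν₂ ν₃ ν₄
    ¬ stratum 𝕜 ν₁ ν₂ ν₃ ν₄ r ⊆ closure (stratum 𝕜 ν₁ ν₂ ν₃ ν₄ s) := by
  let f : Fin (ν₂ + ν₃ - r) → Fin ν₂ ⊕ Fin ν₃ :=
    fun i => finSumFinEquiv.symm ⟨r + i, by omega⟩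
  let c : Fin (ν₂ + ν₃ - r) → Fin ν₄ := Fin.castLE hr1
  apply not_subset_closure _ _ _ (fun x => ((gN x).submatrix c f).det)
  · exact det_mem_subalgebra _ _ fun i j => gN_entry_mem _ _
  · intro x hx
    exact det_submatrix_zero _ _ _ (((stratum_rank (by omega) hx).2).trans_lt (by omega))
  · let Y : Matrix (Fin ν₄) (Fin ν₂ ⊕ Fin ν₃) 𝕜 :=
      Matrix.of fun j i => if (finSumFinEquiv i : ℕ) = r + j then 1 else 0
    refine ⟨⟨unst (1 * coordProj 𝕜 (gE ν₂ ν₃) r * 0)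
      (Y * (1 - coordProj 𝕜 (gE ν₂ ν₃) r) * (1 : Matrix _ _ 𝕜).adjugate),
      unst_mem (param_mul _ _ _ _ _)⟩, ⟨_, _, _, gM_unst _ _, gN_unst _ _⟩, ?_⟩
    simp only [gN_unst, Matrix.adjugate_one, Matrix.mul_one]
    have : (Y * (1 - coordProj 𝕜 (gE ν₂ ν₃) r)).submatrix c f = 1 := by
      ext i j
      simp [coordProj, Y, f, c, Matrix.one_apply, Fin.ext_iff, Matrix.mul_sub, eq_comm]
    rw [this]
    simp

theorem stratum_cover (hν : ν₂ + ν₃ ≤ ν₁ + ν₄)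
    (x : {x : GridAmb 𝕜 ν₁ ν₂ ν₃ ν₄ // x.2.2.1 * x.1 = x.2.2.2 * x.2.1}) :
    ∃ r ∈ Finset.Icc (ν₂ + ν₃ - ν₄) (min ν₁ (ν₂ + ν₃)), x ∈ stratum 𝕜 ν₁ ν₂ ν₃ ν₄ r := by
  have hNM := (gN_mul_gM x.1).2 x.2
  have h1 : (gM x.1).rank ≤ ν₁ := by simpa using Matrix.rank_le_card_width (gM x.1)
  have h2 : (gN x.1).rank ≤ ν₄ := by simpa using Matrix.rank_le_card_height (gN x.1)
  have h3 : (gM x.1).rank + (gN x.1).rank ≤ ν₂ + ν₃ := by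
    have hle : LinearMap.range (gM x.1).mulVecLin ≤ LinearMap.ker (gN x.1).mulVecLin := by
      rintro _ ⟨v, rfl⟩
      simp [Matrix.mulVec_mulVec, hNM]
    have h4 := Submodule.finrank_mono hle
    have hrn := LinearMap.finrank_range_add_finrank_ker (gN x.1).mulVecLin
    rw [Module.finrank_fintype_fun_eq_card] at hrn
    simp only [Fintype.card_sum, Fintype.card_fin] at hrn
    change (gM x.1).rank ≤ _ at h4
    change (gN x.1).rank + _ = _ at hrn
    omega
  refine ⟨max (gM x.1).rank (ν₂ + ν₃ - ν₄), Finset.mem_Icc.2 (by omega), ?_⟩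
  exact exists_param finSumFinEquiv _ _ hNM _ (by omega) (by omega)

theorem component_count [Infinite 𝕜] (hν : ν₂ + ν₃ ≤ ν₁ + ν₄) :
    letI : TopologicalSpace (GridAmb 𝕜 ν₁ ν₂ ν₃ ν₄) := gridZariski 𝕜 ν₁ ν₂ ν₃ ν₄
    (irreducibleComponents
        {x : GridAmb 𝕜 ν₁ ν₂ ν₃ ν₄ // x.2.2.1 * x.1 = x.2.2.2 * x.2.1}).ncard =
        min ν₁ (ν₂ + ν₃) - (ν₂ + ν₃ - ν₄) + 1 := by
  letI : TopologicalSpace (GridAmb 𝕜 ν₁ ν₂ ν₃ ν₄) := gridZariski 𝕜 ν₁ ν₂ ν₃ ν₄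
  rw [components_eq (Finset.Icc (ν₂ + ν₃ - ν₄) (min ν₁ (ν₂ + ν₃))) (stratum 𝕜 ν₁ ν₂ ν₃ ν₄)]
  · rw [Nat.card_Icc]; omega
  · intro r _
    refine ⟨⟨⟨unst (1 * coordProj 𝕜 (gE ν₂ ν₃) r * 0)
      (0 * (1 - coordProj 𝕜 (gE ν₂ ν₃) r) * (1 : Matrix _ _ 𝕜).adjugate),
      unst_mem (param_mul _ _ _ _ _)⟩, ⟨_, _, _, gM_unst _ _, gN_unst _ _⟩⟩, stratum_preirr r⟩
  · exact stratum_cover hν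
  · intro r hr s hs hrs
    rw [Finset.mem_Icc] at hr hs
    rcases lt_or_gt_of_ne hrs with h | h
    · exact stratum_sep_N (by omega) (by omega) h
    · exact stratum_sep_M (by omega) (by omega) h

end Strata

theorem pair_count (ν₁ ν₂ ν₃ ν₄ : ℕ) (hν : ν₂ + ν₃ ≤ ν₁ + ν₄) :
    Set.ncard {p : ℕ × ℕ | p.1 + p.2 = ν₂ + ν₃ ∧ p.1 ≤ ν₁ ∧ p.2 ≤ ν₄} =
      min ν₁ (ν₂ + ν₃) - (ν₂ + ν₃ - ν₄) + 1 := by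
  have : {p : ℕ × ℕ | p.1 + p.2 = ν₂ + ν₃ ∧ p.1 ≤ ν₁ ∧ p.2 ≤ ν₄} =
      (fun r => (r, ν₂ + ν₃ - r)) ''
        (Finset.Icc (ν₂ + ν₃ - ν₄) (min ν₁ (ν₂ + ν₃)) : Set ℕ) := by
    ext ⟨a, b⟩
    simp only [Set.mem_ofPred_eq, Set.mem_image, Finset.mem_coe, Finset.mem_Icc, Prod.mk.injEq]
    constructor
    · intro h
      exact ⟨a, by omega, rfl, by omega⟩
    · rintro ⟨r, h, rfl, rfl⟩
      omega
  rw [this, Set.InjOn.ncard_image, Set.ncard_coe_finset, Nat.card_Icc]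
  · omega
  · intro a _ b _ h
    exact (Prod.mk.inj h).1

/-- When `ν₁ + ν₄ ≥ ν₂ + ν₃`, the number of irreducible components of the representation
variety `E_C(ν)` of the commutative `2 × 2` grid equals the number of pairs `(r₁,r₂)` with
`r₁ + r₂ = ν₂ + ν₃`, `r₁ ≤ ν₁`, `r₂ ≤ ν₄`; that is,
`min ν₁ (ν₂+ν₃) - max 0 (ν₂+ν₃-ν₄) + 1`. -/
theorem stmt7 (𝕜 : Type) [Field 𝕜] [IsAlgClosed 𝕜] (ν₁ ν₂ ν₃ ν₄ : ℕ)
    (hν : ν₂ + ν₃ ≤ ν₁ + ν₄) :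
    letI : TopologicalSpace (GridAmb 𝕜 ν₁ ν₂ ν₃ ν₄) := gridZariski 𝕜 ν₁ ν₂ ν₃ ν₄
    (irreducibleComponents
        {x : GridAmb 𝕜 ν₁ ν₂ ν₃ ν₄ // x.2.2.1 * x.1 = x.2.2.2 * x.2.1}).ncard =
        Set.ncard {p : ℕ × ℕ | p.1 + p.2 = ν₂ + ν₃ ∧ p.1 ≤ ν₁ ∧ p.2 ≤ ν₄} ∧
      (irreducibleComponents
        {x : GridAmb 𝕜 ν₁ ν₂ ν₃ ν₄ // x.2.2.1 * x.1 = x.2.2.2 * x.2.1}).ncard =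
        min ν₁ (ν₂ + ν₃) - (ν₂ + ν₃ - ν₄) + 1 := by
  have : Infinite 𝕜 := IsAlgClosed.instInfinite
  have h := component_count (𝕜 := 𝕜) hν
  exact ⟨h.trans (pair_count ν₁ ν₂ ν₃ ν₄ hν).symm, h⟩
end
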